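/- arXiv:math/0605104 — 6 statements merged into one kernel-verified Lean document; each statement's English description precedes it below -/
import Mathlib

section
/- Let S ⊆ Σ^n be a splittable double-MDS-code and let γ be the number of connected components of its adjacency graph Γ(S). Then the number of MDS codes contained in S is exactly 2^γ. -/
/-- The alphabet `Σ = {0,1,2,3}`. -/
abbrev V4 := Fin 4

/-- The `k`-edge through `x`. -/
def kEdge {n : ℕ} (x : Fin n → V4) (k : Fin n) : Set (Fin n → V4) :=
  {y | ∃ a : V4, y = Function.update x k a}

/-- A (distance 2) MDS code: every edge meets it in exactly one vertex. -/
def IsMDSCode {n : ℕ} (C : Set (Fin n → V4)) : Prop :=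
  ∀ (x : Fin n → V4) (k : Fin n), (kEdge x k ∩ C).ncard = 1

/-- A double-MDS-code: every edge meets it in exactly two vertices. -/
def IsDoubleMDSCode {n : ℕ} (S : Set (Fin n → V4)) : Prop :=
  ∀ (x : Fin n → V4) (k : Fin n), (kEdge x k ∩ S).ncard = 2

/-- A set is splittable if it is the union of two disjoint MDS codes. -/
def IsSplittable {n : ℕ} (S : Set (Fin n → V4)) : Prop :=
  ∃ C₁ C₂ : Set (Fin n → V4),
    IsMDSCode C₁ ∧ IsMDSCode C₂ ∧ Disjoint C₁ C₂ ∧ S = C₁ ∪ C₂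

/-- The adjacency graph `Γ(S)`: vertices are the elements of `S`, with edges
between vertices of `S` differing in exactly one coordinate. -/
def adjGraph {n : ℕ} (S : Set (Fin n → V4)) : SimpleGraph S :=
  SimpleGraph.fromRel
    (fun x y => {k : Fin n | (x : Fin n → V4) k ≠ (y : Fin n → V4) k}.ncard = 1)

/-!
Each edge meets `S` in two adjacent vertices of `Γ(S)`, so a subset of `S` is an MDS code exactly
when it is a colour class of a proper 2-colouring of `Γ(S)`. Splittability provides one such
colouring, and any other differs from it by a swap of the two colours on some of the connected
components, chosen freely.
-/

section TwoColorings

variable {V : Type*} {G : SimpleGraph V}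

/-- The 2-colouring obtained from `c` by swapping the two colours on the connected components
marked `true` by `s`. -/
def swapOnComponents (c : G.Coloring Bool) (s : G.ConnectedComponent → Bool) : G.Coloring Bool :=
  SimpleGraph.Coloring.mk (fun v ↦ (c v ^^ s (G.connectedComponentMk v))) fun {v w} hvw ↦ by
    rw [SimpleGraph.ConnectedComponent.connectedComponentMk_eq_of_adj hvw]
    simpa using c.valid hvw

theorem swapOnComponents_apply (c : G.Coloring Bool) (s : G.ConnectedComponent → Bool) (v : V) :
    swapOnComponents c s v = (c v ^^ s (G.connectedComponentMk v)) :=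
  rfl

theorem xor_coloring_eq_of_walk (c d : G.Coloring Bool) {v w : V} (p : G.Walk v w) :
    (c v ^^ d v) = (c w ^^ d w) := by
  have same_parity : (c v ↔ c w) ↔ (d v ↔ d w) :=
    (c.even_length_iff_congr p).symm.trans (d.even_length_iff_congr p)
  grind

theorem swapOnComponents_injective (c : G.Coloring Bool) :
    Function.Injective (swapOnComponents c) := by
  intro s t hst
  ext K
  induction K using SimpleGraph.ConnectedComponent.ind with
  | h v => simpa [swapOnComponents_apply] using DFunLike.congr_fun hst v

theorem swapOnComponents_surjective (c : G.Coloring Bool) :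
    Function.Surjective (swapOnComponents c) := by
  intro d
  refine ⟨SimpleGraph.ConnectedComponent.lift (fun v ↦ (c v ^^ d v))
    fun _ _ p _ ↦ xor_coloring_eq_of_walk c d p, ?_⟩
  ext v
  simp [swapOnComponents_apply]

theorem card_coloring_bool [Finite G.ConnectedComponent] (c : G.Coloring Bool) :
    Nat.card (G.Coloring Bool) = 2 ^ Nat.card G.ConnectedComponent :=
  calc
    Nat.card (G.Coloring Bool) = Nat.card (G.ConnectedComponent → Bool) :=
      (Nat.card_eq_of_bijective (swapOnComponents c)
        ⟨swapOnComponents_injective c, swapOnComponents_surjective c⟩).symm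
    _ = 2 ^ Nat.card G.ConnectedComponent := by simp [Nat.card_fun]

end TwoColorings

section ExactTransversals

variable {V ι : Type*}

/-- `C` meets every line `e i` in exactly `m` points. For the `k`-edges of `Σ^n`, the cases `m = 1`
and `m = 2` are the MDS codes and the double-MDS-codes. -/
def IsExactTransversal (e : ι → Set V) (m : ℕ) (C : Set V) : Prop :=
  ∀ i, (e i ∩ C).ncard = m

/-- The collinearity graph on `S`: two points of `S` are adjacent if some line `e i` contains
both. -/
def collinearityGraph (e : ι → Set V) (S : Set V) : SimpleGraph S where
  Adj x y := x ≠ y ∧ ∃ i, (x : V) ∈ e i ∧ (y : V) ∈ e i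
  symm := ⟨fun _ _ ⟨hne, i, hx, hy⟩ ↦ ⟨hne.symm, i, hy, hx⟩⟩
  loopless := ⟨fun _ h ↦ h.1 rfl⟩

theorem ncard_pair_inter_eq_one_iff {x y : V} (hne : x ≠ y) (C : Set V) :
    (({x, y} : Set V) ∩ C).ncard = 1 ↔ (x ∈ C ↔ y ∉ C) := by
  by_cases hx : x ∈ C <;> by_cases hy : y ∈ C <;>
    simp [hx, hy, hne, Set.insert_inter_of_mem, Set.insert_inter_of_notMem]

variable {e : ι → Set V} {S C : Set V}

theorem IsExactTransversal.inter_eq_pair (hS : IsExactTransversal e 2 S) {i : ι} {x y : V}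
    (hne : x ≠ y) (hx : x ∈ e i ∩ S) (hy : y ∈ e i ∩ S) : e i ∩ S = {x, y} :=
  (Set.eq_of_subset_of_ncard_le (Set.pair_subset hx hy) (by rw [hS i, Set.ncard_pair hne])
    (Set.finite_of_ncard_ne_zero (by simp [hS i]))).symm

theorem isExactTransversal_one_iff_forall_adj (hS : IsExactTransversal e 2 S) (hCS : C ⊆ S) :
    IsExactTransversal e 1 C ↔
      ∀ x y : S, (collinearityGraph e S).Adj x y → ((x : V) ∈ C ↔ (y : V) ∉ C) := by
  have inter_eq (i : ι) : e i ∩ C = e i ∩ S ∩ C := by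
    rw [Set.inter_assoc, Set.inter_eq_right.2 hCS]
  constructor
  · rintro hC x y ⟨hne, i, hx, hy⟩
    have hne' : (x : V) ≠ y := Subtype.coe_ne_coe.2 hne
    rw [← ncard_pair_inter_eq_one_iff hne',
      ← hS.inter_eq_pair hne' ⟨hx, x.2⟩ ⟨hy, y.2⟩, ← inter_eq]
    exact hC i
  · intro hadj i
    obtain ⟨x, y, hne, hxy⟩ := Set.ncard_eq_two.1 (hS i)
    have hx : x ∈ e i ∩ S := by simp [hxy]
    have hy : y ∈ e i ∩ S := by simp [hxy]
    rw [inter_eq, hxy, ncard_pair_inter_eq_one_iff hne]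
    exact hadj ⟨x, hx.2⟩ ⟨y, hy.2⟩ ⟨by simpa using hne, i, hx.1, hy.1⟩

open Classical in
/-- The exact transversals contained in `S` are the `true` colour classes of the 2-colourings of the
collinearity graph on `S`. -/
noncomputable def exactTransversalEquivColoring (hS : IsExactTransversal e 2 S) :
    {C : Set V // IsExactTransversal e 1 C ∧ C ⊆ S} ≃ (collinearityGraph e S).Coloring Bool where
  toFun C := SimpleGraph.Coloring.mk (fun x ↦ decide ((x : V) ∈ C.1)) fun {x y} hxy ↦ by
    have := (isExactTransversal_one_iff_forall_adj hS C.2.2).1 C.2.1 x y hxy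
    simp [this]
  invFun c := ⟨Subtype.val '' {x : S | c x = true},
    (isExactTransversal_one_iff_forall_adj hS (Subtype.coe_image_subset _ _)).2 fun x y hxy ↦ by
      simpa using Bool.eq_not.2 (c.valid hxy),
    Subtype.coe_image_subset _ _⟩
  left_inv C := by
    ext v
    have mem_of_mem : v ∈ C.1 → v ∈ S := @C.2.2 v
    simpa [SimpleGraph.Coloring.mk] using mem_of_mem
  right_inv c := by
    ext x
    simp [SimpleGraph.Coloring.mk]

end ExactTransversals

theorem card_MDS_codes_in_splittable_general {V ι : Type*} {e : ι → Set V} {S : Set V}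
    [Finite (collinearityGraph e S).ConnectedComponent] (hS : IsExactTransversal e 2 S)
    (hexists : ∃ C ⊆ S, IsExactTransversal e 1 C) :
    Nat.card {C : Set V // IsExactTransversal e 1 C ∧ C ⊆ S} =
      2 ^ Nat.card (collinearityGraph e S).ConnectedComponent := by
  obtain ⟨D, hDS, hD⟩ := hexists
  rw [Nat.card_congr (exactTransversalEquivColoring hS)]
  exact card_coloring_bool (exactTransversalEquivColoring hS ⟨D, hD, hDS⟩)

section Codes

variable {n : ℕ}

theorem mem_kEdge_iff {x y : Fin n → V4} {k : Fin n} : y ∈ kEdge x k ↔ ∀ j ≠ k, y j = x j := by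
  simp [kEdge, Function.eq_update_iff]

theorem ncard_ne_eq_one_iff {x y : Fin n → V4} :
    {k | x k ≠ y k}.ncard = 1 ↔ x ≠ y ∧ ∃ z k, x ∈ kEdge z k ∧ y ∈ kEdge z k := by
  simp only [Set.ncard_eq_one, mem_kEdge_iff]
  constructor
  · rintro ⟨k, hk⟩
    have differ_iff (j : Fin n) : x j ≠ y j ↔ j = k := Set.ext_iff.1 hk j
    exact ⟨fun hxy ↦ (differ_iff k).2 rfl (congrFun hxy k), x, k, fun _ _ ↦ rfl,
      fun j hj ↦ (not_not.1 (mt (differ_iff j).1 hj)).symm⟩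
  · rintro ⟨hne, z, k, hx, hy⟩
    have differ_only_at (j : Fin n) (hj : x j ≠ y j) : j = k := by
      by_contra hjk
      exact hj ((hx j hjk).trans (hy j hjk).symm)
    obtain ⟨j, hj⟩ := Function.ne_iff.1 hne
    exact ⟨k, Set.Subset.antisymm differ_only_at (by simpa using differ_only_at j hj ▸ hj)⟩

theorem adjGraph_eq_collinearityGraph (S : Set (Fin n → V4)) :
    adjGraph S = collinearityGraph (Function.uncurry kEdge) S := by
  ext x y
  simp only [adjGraph, collinearityGraph, SimpleGraph.fromRel_adj, ncard_ne_eq_one_iff,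
    Prod.exists, Function.uncurry_apply_pair, Subtype.coe_ne_coe]
  grind

theorem isMDSCode_iff_isExactTransversal {C : Set (Fin n → V4)} :
    IsMDSCode C ↔ IsExactTransversal (Function.uncurry kEdge) 1 C := by
  simp [IsMDSCode, IsExactTransversal]

theorem isDoubleMDSCode_iff_isExactTransversal {S : Set (Fin n → V4)} :
    IsDoubleMDSCode S ↔ IsExactTransversal (Function.uncurry kEdge) 2 S := by
  simp [IsDoubleMDSCode, IsExactTransversal]

theorem IsSplittable.exists_isMDSCode_subset {S : Set (Fin n → V4)} (hS : IsSplittable S) :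
    ∃ C ⊆ S, IsMDSCode C := by
  obtain ⟨C, D, hC, -, -, rfl⟩ := hS
  exact ⟨C, Set.subset_union_left, hC⟩

end Codes

/-- Proposition 1: a splittable double-MDS-code `S` whose adjacency graph has
`γ` connected components contains exactly `2^γ` MDS codes. -/
theorem card_MDS_codes_in_splittable (n : ℕ) (S : Set (Fin n → V4))
    (hS : IsDoubleMDSCode S) (hsplit : IsSplittable S) :
    Nat.card {C : Set (Fin n → V4) // IsMDSCode C ∧ C ⊆ S} =
      2 ^ Nat.card (adjGraph S).ConnectedComponent := by
  have hcode := hsplit.exists_isMDSCode_subset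
  simp only [isMDSCode_iff_isExactTransversal, isDoubleMDSCode_iff_isExactTransversal,
    adjGraph_eq_collinearityGraph] at hS hcode ⊢
  exact card_MDS_codes_in_splittable_general hS hcode
end

section
/- Let S₁, S₂ ⊆ Σ^n be double-MDS-codes. (a) If there is a nonempty double-code S₀ with S₀ ⊆ S₁ ∩ S₂, then S₁ = S₂. (b) If there is a nonempty double-code S₀ with S₀ ⊆ S₁ \ S₂, then S₁ = Σ^n \ S₂. -/
/-- A double-code: every edge through a point of `S` meets `S` in exactly
two vertices. -/
def IsDoubleCode {n : ℕ} (S : Set (Fin n → V4)) : Prop :=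
  ∀ x ∈ S, ∀ k : Fin n, (kEdge x k ∩ S).ncard = 2

/-!
The proof of (a) is by induction on `n`, slicing along the first coordinate. Wherever a layer of
`S₀` is nonempty, the corresponding layers of `S₁` and `S₂` agree by induction. On a `0`-edge,
two points whose membership in `S₁` is the same, and at which `S₁` and `S₂` agree,
determine both codes on the whole edge. To find two such points: if at least three layers of `S₀`
are nonempty, use the pigeonhole principle; otherwise exactly two are, they coincide as sets, and
by induction so do the two corresponding layers of `S₁`. Part (b) is (a) applied to `S₁` and `S₂ᶜ`.
-/

section FiniteSets

variable {α : Type*}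

theorem exists_ne_mem_iff_of_two_lt_ncard {s : Set α} (hs : 2 < s.ncard) (t : Set α) :
    ∃ i ∈ s, ∃ j ∈ s, i ≠ j ∧ (i ∈ t ↔ j ∈ t) := by
  have card_lt : (Set.univ : Set Prop).ncard < s.ncard := by
    simpa [Set.ncard_univ] using hs
  obtain ⟨i, hi, j, hj, hij, h⟩ :=
    Set.exists_ne_map_eq_of_ncard_lt_of_maps_to card_lt (f := (· ∈ t)) fun _ _ ↦ Set.mem_univ _
  exact ⟨i, hi, j, hj, hij, iff_of_eq h⟩

theorem eq_pair_of_ncard_eq_two {s : Set α} (hs : s.ncard = 2) {i j : α} (hij : i ≠ j)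
    (hi : i ∈ s) (hj : j ∈ s) : s = {i, j} :=
  (Set.eq_of_subset_of_ncard_le (Set.pair_subset hi hj)
    (by rw [hs, Set.ncard_pair hij]) (Set.finite_of_ncard_ne_zero (by omega))).symm

theorem ncard_compl_eq_two (hα : Nat.card α = 4) {s : Set α} (hs : s.ncard = 2) :
    sᶜ.ncard = 2 := by
  have : Finite α := Nat.finite_of_card_ne_zero (by omega)
  have := Set.ncard_add_ncard_compl s
  omega

theorem eq_of_ncard_eq_two_of_mem_iff (hα : Nat.card α = 4) {s t : Set α}
    (hs : s.ncard = 2) (ht : t.ncard = 2) {i j : α} (hij : i ≠ j) (hsij : i ∈ s ↔ j ∈ s)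
    (hi : i ∈ s ↔ i ∈ t) (hj : j ∈ s ↔ j ∈ t) : s = t := by
  by_cases his : i ∈ s
  · have hjs : j ∈ s := hsij.1 his
    rw [eq_pair_of_ncard_eq_two hs hij his hjs,
      eq_pair_of_ncard_eq_two ht hij (hi.1 his) (hj.1 hjs)]
  · have hjs : j ∉ s := mt hsij.2 his
    rw [← compl_inj_iff, eq_pair_of_ncard_eq_two (ncard_compl_eq_two hα hs) hij his hjs,
      eq_pair_of_ncard_eq_two (ncard_compl_eq_two hα ht) hij (mt hi.2 his) (mt hj.2 hjs)]

end FiniteSets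

section Edges

variable {n : ℕ} {S : Set (Fin n → V4)}

theorem ncard_kEdge_inter (S : Set (Fin n → V4)) (x : Fin n → V4) (k : Fin n) :
    (kEdge x k ∩ S).ncard = (Function.update x k ⁻¹' S).ncard := by
  have kEdge_eq_range : kEdge x k = Set.range (Function.update x k) :=
    Set.ext fun _ ↦ exists_congr fun _ ↦ eq_comm
  rw [kEdge_eq_range, Set.inter_comm, ← Set.image_preimage_eq_inter_range,
    Set.ncard_image_of_injective _ (Function.update_injective x k)]

protected theorem IsDoubleMDSCode.compl (hS : IsDoubleMDSCode S) : IsDoubleMDSCode Sᶜ := by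
  intro x k
  rw [ncard_kEdge_inter, Set.preimage_compl]
  exact ncard_compl_eq_two (Nat.card_fin 4) ((ncard_kEdge_inter S x k).symm.trans (hS x k))

end Edges

section Slices

variable {n : ℕ} {S T : Set (Fin (n + 1) → V4)}

/-- The slice of `S` at first coordinate `a`, with that coordinate dropped so that induction on the
dimension applies. -/
def layer (S : Set (Fin (n + 1) → V4)) (a : V4) : Set (Fin n → V4) :=
  {y | Fin.cons a y ∈ S}

/-- The trace of `S` on the `0`-edge over `y`, recorded by first coordinates. -/
def column (S : Set (Fin (n + 1) → V4)) (y : Fin n → V4) : Set V4 :=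
  {a | Fin.cons a y ∈ S}

/-- The first coordinates occurring in `S`; for the small code `S₀` these index the layers on which
the two large codes agree by induction. -/
def nonemptyLayers (S : Set (Fin (n + 1) → V4)) : Set V4 :=
  {a | (layer S a).Nonempty}

theorem layer_mono (h : S ⊆ T) (a : V4) : layer S a ⊆ layer T a :=
  fun _ hy ↦ h hy

theorem mem_column_iff_of_layer_eq {a b : V4} (h : layer S a = layer T b) (y : Fin n → V4) :
    a ∈ column S y ↔ b ∈ column T y :=
  Set.ext_iff.1 h y

theorem eq_of_forall_column_eq (h : ∀ y, column S y = column T y) : S = T := by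
  ext x
  rw [← Fin.cons_self_tail x]
  exact Set.ext_iff.1 (h (Fin.tail x)) (x 0)

theorem column_subset_nonemptyLayers (S : Set (Fin (n + 1) → V4)) (y : Fin n → V4) :
    column S y ⊆ nonemptyLayers S :=
  fun _ ha ↦ ⟨y, ha⟩

theorem ncard_kEdge_inter_layer (S : Set (Fin (n + 1) → V4)) (a : V4) (y : Fin n → V4)
    (k : Fin n) :
    (kEdge y k ∩ layer S a).ncard = (kEdge (Fin.cons a y) k.succ ∩ S).ncard := by
  rw [ncard_kEdge_inter, ncard_kEdge_inter]
  congr 1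
  ext b
  simp only [layer, Set.mem_preimage, Set.mem_ofPred_eq, Fin.cons_update]

theorem ncard_kEdge_zero_inter (S : Set (Fin (n + 1) → V4)) (a : V4) (y : Fin n → V4) :
    (kEdge (Fin.cons a y) 0 ∩ S).ncard = (column S y).ncard := by
  rw [ncard_kEdge_inter]
  congr 1
  ext b
  simp only [column, Set.mem_preimage, Set.mem_ofPred_eq, Fin.update_cons_zero]

protected theorem IsDoubleMDSCode.layer (hS : IsDoubleMDSCode S) (a : V4) :
    IsDoubleMDSCode (layer S a) :=
  fun y k ↦ (ncard_kEdge_inter_layer S a y k).trans (hS _ _)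

theorem IsDoubleMDSCode.ncard_column (hS : IsDoubleMDSCode S) (y : Fin n → V4) :
    (column S y).ncard = 2 :=
  (ncard_kEdge_zero_inter S 0 y).symm.trans (hS _ _)

protected theorem IsDoubleCode.layer (hS : IsDoubleCode S) (a : V4) :
    IsDoubleCode (layer S a) :=
  fun y hy k ↦ (ncard_kEdge_inter_layer S a y k).trans (hS _ hy _)

theorem IsDoubleCode.ncard_column (hS : IsDoubleCode S) {y : Fin n → V4} {a : V4}
    (ha : a ∈ column S y) : (column S y).ncard = 2 :=
  (ncard_kEdge_zero_inter S a y).symm.trans (hS _ ha _)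

theorem IsDoubleCode.exists_ncard_column_eq_two (hS : IsDoubleCode S) (hne : S.Nonempty) :
    ∃ y, (column S y).ncard = 2 := by
  obtain ⟨x, hx⟩ := hne
  rw [← Fin.cons_self_tail x] at hx
  exact ⟨Fin.tail x, hS.ncard_column hx⟩

theorem IsDoubleCode.layer_subset_layer_of_ncard_le_two (hS : IsDoubleCode S)
    (hcard : (nonemptyLayers S).ncard ≤ 2) (a : V4) {b : V4} (hb : b ∈ nonemptyLayers S) :
    layer S a ⊆ layer S b := by
  intro y hy
  have column_eq : column S y = nonemptyLayers S :=
    Set.eq_of_subset_of_ncard_le (column_subset_nonemptyLayers S y)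
      (by rwa [hS.ncard_column (a := a) hy])
  exact column_eq.ge hb

end Slices

theorem IsDoubleCode.exists_ne_mem_column_iff {n : ℕ} {S₁ S₀ : Set (Fin (n + 1) → V4)}
    (h₀ : IsDoubleCode S₀) (hne : S₀.Nonempty)
    (layer_eq : ∀ a ∈ nonemptyLayers S₀, ∀ b,
      layer S₀ a ⊆ layer S₀ b → layer S₁ a = layer S₁ b) (y : Fin n → V4) :
    ∃ i ∈ nonemptyLayers S₀, ∃ j ∈ nonemptyLayers S₀,
      i ≠ j ∧ (i ∈ column S₁ y ↔ j ∈ column S₁ y) := by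
  rcases lt_or_ge 2 (nonemptyLayers S₀).ncard with hcard | hcard
  · exact exists_ne_mem_iff_of_two_lt_ncard hcard _
  · obtain ⟨z, hz⟩ := h₀.exists_ncard_column_eq_two hne
    obtain ⟨i, hi, j, hj, hij⟩ : (column S₀ z).Nontrivial :=
      Set.one_lt_ncard_iff_nontrivial.1 (by omega)
    have hi' := column_subset_nonemptyLayers S₀ z hi
    have hj' := column_subset_nonemptyLayers S₀ z hj
    exact ⟨i, hi', j, hj', hij, mem_column_iff_of_layer_eq
      (layer_eq i hi' j (h₀.layer_subset_layer_of_ncard_le_two hcard i hj')) y⟩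

theorem IsDoubleMDSCode.eq_of_common_doubleCode {n : ℕ} {S₁ S₂ S₀ : Set (Fin n → V4)}
    (h₁ : IsDoubleMDSCode S₁) (h₂ : IsDoubleMDSCode S₂) (h₀ : IsDoubleCode S₀)
    (hne : S₀.Nonempty) (hs₁ : S₀ ⊆ S₁) (hs₂ : S₀ ⊆ S₂) : S₁ = S₂ := by
  induction n with
  | zero => rw [(hne.mono hs₁).eq_univ, (hne.mono hs₂).eq_univ]
  | succ n ih =>
    have layer_eq_layer : ∀ a ∈ nonemptyLayers S₀, layer S₁ a = layer S₂ a := fun a ha ↦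
      ih (h₁.layer a) (h₂.layer a) (h₀.layer a) ha (layer_mono hs₁ a) (layer_mono hs₂ a)
    refine eq_of_forall_column_eq fun y ↦ ?_
    obtain ⟨i, hi, j, hj, hij, mem_iff⟩ := h₀.exists_ne_mem_column_iff (S₁ := S₁) hne
      (fun a ha b hab ↦ ih (h₁.layer a) (h₁.layer b) (h₀.layer a) ha
        (layer_mono hs₁ a) (hab.trans (layer_mono hs₁ b))) y
    exact eq_of_ncard_eq_two_of_mem_iff (Nat.card_fin 4) (h₁.ncard_column y) (h₂.ncard_column y)
      hij mem_iff (mem_column_iff_of_layer_eq (layer_eq_layer i hi) y)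
      (mem_column_iff_of_layer_eq (layer_eq_layer j hj) y)

/-- Proposition 3 (unique extension of a double-code): for double-MDS-codes
`S₁, S₂`, (a) a nonempty double-code inside `S₁ ∩ S₂` forces `S₁ = S₂`;
(b) a nonempty double-code inside `S₁ \ S₂` forces `S₁ = Σ^n \ S₂`. -/
theorem unique_extension_of_double_code (n : ℕ)
    (S₁ S₂ : Set (Fin n → V4))
    (h₁ : IsDoubleMDSCode S₁) (h₂ : IsDoubleMDSCode S₂) :
    (∀ S₀ : Set (Fin n → V4),
        S₀.Nonempty → IsDoubleCode S₀ → S₀ ⊆ S₁ ∩ S₂ → S₁ = S₂) ∧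
    (∀ S₀ : Set (Fin n → V4),
        S₀.Nonempty → IsDoubleCode S₀ → S₀ ⊆ S₁ \ S₂ → S₁ = S₂ᶜ) := by
  refine ⟨fun S₀ hne h₀ hs ↦ ?_, fun S₀ hne h₀ hs ↦ ?_⟩
  · obtain ⟨hs₁, hs₂⟩ := Set.subset_inter_iff.1 hs
    exact h₁.eq_of_common_doubleCode h₂ h₀ hne hs₁ hs₂
  · obtain ⟨hs₁, hs₂⟩ := Set.subset_inter_iff.1 hs
    exact h₁.eq_of_common_doubleCode h₂.compl h₀ hne hs₁ hs₂
end

section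
/- Let n ≥ 4 and let {P₁, P₂, P₃} be a partition of the Boolean n-cube {0,1}^n into three nonempty sets such that for every k ∈ {1,…,n} and every b ∈ {0,1}, at least one of the layers P₁|_k^b, P₂|_k^b, P₃|_k^b is empty. Then {P₁, P₂, P₃} = {{ᾱ}, {¬ᾱ}, {0,1}^n \ {ᾱ, ¬ᾱ}} for some ᾱ ∈ {0,1}^n, where ¬ᾱ denotes the coordinatewise complement of ᾱ. -/
/-!
Each coordinate `k` has two layers, and no single nonempty part misses both. So two distinct parts
miss opposite layers at `k`, and only the third one, the exception at `k`, can meet both. If the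
exceptions at two coordinates differed, Hall's theorem would assign to the three parts distinct
coordinates at which each of them misses a layer; a vertex lying in all three of those layers would
belong to no part. Hence the exception is the same at all coordinates, and the other two parts are
nonempty and confined to opposite values of every coordinate: they are two antipodal vertices.
-/

open Function

theorem exists_perm_forall_ne {κ : Type*} [Finite κ] {f : κ → κ} (hf : ∃ x y, f x ≠ f y) :
    ∃ σ : Equiv.Perm κ, ∀ x, σ x ≠ f x := by
  classical
  have := Fintype.ofFinite κ
  have hall (s : Finset κ) : s.card ≤ (s.biUnion fun x => {f x}ᶜ).card := by
    by_cases hs : ∃ x ∈ s, ∃ y ∈ s, f x ≠ f y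
    · obtain ⟨x, hx, y, hy, hxy⟩ := hs
      have biUnion_eq_univ : (s.biUnion fun x => {f x}ᶜ) = Finset.univ := by
        ext z
        simp only [Finset.mem_biUnion, Finset.mem_compl, Finset.mem_singleton, Finset.mem_univ,
          iff_true]
        by_cases hz : z = f x
        · exact ⟨y, hy, hz ▸ hxy⟩
        · exact ⟨x, hx, hz⟩
      exact biUnion_eq_univ ▸ s.card_le_univ
    · push Not at hs
      obtain rfl | ⟨x, hx⟩ := s.eq_empty_or_nonempty
      · simp
      have hs_ne_univ : s ≠ Finset.univ := by
        rintro rfl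
        obtain ⟨y, z, hyz⟩ := hf
        exact hyz (hs y (Finset.mem_univ y) z (Finset.mem_univ z))
      calc s.card ≤ Fintype.card κ - 1 :=
            Nat.le_sub_one_of_lt (s.card_lt_iff_ne_univ.2 hs_ne_univ)
        _ = ({f x}ᶜ : Finset κ).card := by rw [Finset.card_compl, Finset.card_singleton]
        _ ≤ _ := Finset.card_le_card (Finset.subset_biUnion_of_mem (fun x => {f x}ᶜ) hx)
  obtain ⟨g, hg_inj, hg⟩ := (Finset.all_card_le_biUnion_card_iff_exists_injective _).1 hall
  exact ⟨Equiv.ofBijective g (Finite.injective_iff_bijective.1 hg_inj),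
    fun x => by simpa using hg x⟩

variable {ι κ β : Type*}

/-- The layer `P|ₖᵇ` of `P` is empty. The layer itself, a subset of a cube of one dimension less,
is not formed. -/
def AvoidsLayer (P : Set (ι → β)) (k : ι) (b : β) : Prop :=
  ∀ x ∈ P, x k ≠ b

/-- One of the two layers of `P` in direction `k` is empty, and so is the opposite layer of `Q`;
equivalently, coordinate `k` is constant on `P` and on `Q`, with different values. -/
def AvoidOppositeLayers (P Q : Set (ι → Bool)) (k : ι) : Prop :=
  ∃ b, AvoidsLayer P k b ∧ AvoidsLayer Q k !b

theorem AvoidOppositeLayers.symm {P Q : Set (ι → Bool)} {k : ι}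
    (h : AvoidOppositeLayers P Q k) : AvoidOppositeLayers Q P k := by
  obtain ⟨b, hP, hQ⟩ := h
  exact ⟨!b, hQ, by rwa [Bool.not_not]⟩

theorem exists_not_avoidsLayer_of_injective [Nonempty β] {P : κ → Set (ι → β)}
    (hcover : ∀ x, ∃ i, x ∈ P i) {m : κ → ι} (hm : Injective m) (b : κ → β) :
    ∃ i, ¬ AvoidsLayer (P i) (m i) (b i) := by
  let x : ι → β := extend m b fun _ => Classical.arbitrary β
  obtain ⟨i, hi⟩ := hcover x
  exact ⟨i, fun h => h x hi (hm.extend_apply b _ i)⟩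

theorem eq_of_forall_ne_exists_avoidsLayer [Nonempty β] [Finite κ] (e : κ ↪ ι)
    {P : κ → Set (ι → β)} (hcover : ∀ x, ∃ i, x ∈ P i) {r : ι → κ}
    (hr : ∀ k, ∀ i ≠ r k, ∃ b, AvoidsLayer (P i) k b) (k l : ι) : r k = r l := by
  classical
  by_contra hkl
  obtain ⟨m, hmk, hml⟩ : ∃ m : κ ↪ ι, m (r k) = k ∧ m (r l) = l := by
    have hk : e.setValue (r k) k (r k) = k := Embedding.setValue_eq ..
    have hne : e.setValue (r k) k (r k) ≠ l := fun h => hkl (congrArg r (hk.symm.trans h))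
    exact ⟨(e.setValue (r k) k).setValue (r l) l,
      (Embedding.setValue_eq_of_ne hkl hne).trans hk, Embedding.setValue_eq ..⟩
  obtain ⟨σ, hσ⟩ : ∃ σ : Equiv.Perm κ, ∀ i, σ i ≠ r (m i) :=
    exists_perm_forall_ne ⟨r k, r l, by rwa [hmk, hml]⟩
  have avoids (i : κ) : ∃ b, AvoidsLayer (P i) (m (σ.symm i)) b :=
    hr _ i (by simpa using hσ (σ.symm i))
  choose b hb using avoids
  obtain ⟨i, hi⟩ :=
    exists_not_avoidsLayer_of_injective hcover (m.injective.comp σ.symm.injective) b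
  exact hi (hb i)

theorem exists_pairwise_avoidOppositeLayers {P : Fin 3 → Set (ι → Bool)}
    (hne : ∀ i, (P i).Nonempty) {k : ι} (hk : ∀ b, ∃ i, AvoidsLayer (P i) k b) :
    ∃ r, ({r}ᶜ : Set (Fin 3)).Pairwise fun i j => AvoidOppositeLayers (P i) (P j) k := by
  obtain ⟨i, hi⟩ := hk false
  obtain ⟨j, hj⟩ := hk true
  have hij : i ≠ j := by
    rintro rfl
    obtain ⟨x, hx⟩ := hne i
    cases hxk : x k
    exacts [hi x hx hxk, hj x hx hxk]
  have opposite : AvoidOppositeLayers (P i) (P j) k := ⟨false, hi, hj⟩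
  obtain ⟨r, hri, hrj⟩ := Fin.exists_ne_and_ne_of_two_lt i j (by norm_num)
  refine ⟨r, fun i' hi' j' hj' hij' => ?_⟩
  rw [Set.mem_compl_singleton_iff] at hi' hj'
  obtain ⟨rfl, rfl⟩ | ⟨rfl, rfl⟩ : i' = i ∧ j' = j ∨ i' = j ∧ j' = i := by omega
  exacts [opposite, opposite.symm]

theorem exists_eq_singleton_and_eq_singleton_not {P Q : Set (ι → Bool)} (hP : P.Nonempty)
    (hQ : Q.Nonempty) (h : ∀ k, AvoidOppositeLayers P Q k) :
    ∃ α : ι → Bool, P = {α} ∧ Q = {fun k => !(α k)} := by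
  choose b hPb hQb using h
  refine ⟨fun k => !(b k), hP.subset_singleton_iff.1 fun x hx => ?_,
    hQ.subset_singleton_iff.1 fun x hx => ?_⟩
  · exact funext fun k => Bool.eq_not.2 (hPb k x hx)
  · exact funext fun k => Bool.eq_not.2 (hQb k x hx)

theorem exists_forall_pairwise_avoidOppositeLayers (e : Fin 3 ↪ ι) {P : Fin 3 → Set (ι → Bool)}
    (hne : ∀ i, (P i).Nonempty) (hcover : ∀ x, ∃ i, x ∈ P i)
    (hlayers : ∀ k b, ∃ i, AvoidsLayer (P i) k b) :
    ∃ r, ∀ k, ({r}ᶜ : Set (Fin 3)).Pairwise fun i j => AvoidOppositeLayers (P i) (P j) k := by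
  choose r hr using fun k => exists_pairwise_avoidOppositeLayers hne (hlayers k)
  have hr_avoids (k : ι) (i : Fin 3) (hi : i ≠ r k) : ∃ b, AvoidsLayer (P i) k b := by
    obtain ⟨j, hji, hjr⟩ := Fin.exists_ne_and_ne_of_two_lt i (r k) (by norm_num)
    exact (hr k hi hjr hji.symm).imp fun _ => And.left
  have hr_const (k : ι) : r k = r (e 0) :=
    eq_of_forall_ne_exists_avoidsLayer e hcover hr_avoids k (e 0)
  exact ⟨r (e 0), fun k => hr_const k ▸ hr k⟩

theorem exists_range_eq_of_pairwise_avoidOppositeLayers {P : Fin 3 → Set (ι → Bool)}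
    (hne : ∀ i, (P i).Nonempty) (hcover : ∀ x, ∃ i, x ∈ P i) (hdisj : Pairwise (Disjoint on P))
    {r : Fin 3}
    (hr : ∀ k, ({r}ᶜ : Set (Fin 3)).Pairwise fun i j => AvoidOppositeLayers (P i) (P j) k) :
    ∃ α : ι → Bool, Set.range P =
      {{α}, {fun k => !(α k)}, ({α, fun k => !(α k)} : Set (ι → Bool))ᶜ} := by
  obtain ⟨i, hir, -⟩ := Fin.exists_ne_and_ne_of_two_lt r r (by norm_num)
  obtain ⟨j, hji, hjr⟩ := Fin.exists_ne_and_ne_of_two_lt i r (by norm_num)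
  have eq_or_eq_or_eq (s : Fin 3) : s = i ∨ s = j ∨ s = r := by omega
  have univ_eq : Set.univ = {i, j, r} := (Set.eq_univ_of_forall eq_or_eq_or_eq).symm
  obtain ⟨α, hPi, hPj⟩ := exists_eq_singleton_and_eq_singleton_not (hne i) (hne j)
    fun k => hr k hir hjr hji.symm
  have hPr : P r = (P i ∪ P j)ᶜ := by
    refine Set.Subset.antisymm
      ((hdisj hir.symm).union_right (hdisj hjr.symm)).subset_compl_right fun x hx => ?_
    obtain ⟨s, hs⟩ := hcover x
    obtain rfl | rfl | rfl := eq_or_eq_or_eq s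
    exacts [(hx (.inl hs)).elim, (hx (.inr hs)).elim, hs]
  refine ⟨α, ?_⟩
  rw [← Set.image_univ, univ_eq, Set.image_insert_eq, Set.image_pair, hPr, hPi, hPj,
    Set.singleton_union]

theorem partition_of_boolean_cube_general (e : Fin 3 ↪ ι) {P₁ P₂ P₃ : Set (ι → Bool)}
    (hne₁ : P₁.Nonempty) (hne₂ : P₂.Nonempty) (hne₃ : P₃.Nonempty)
    (hcover : P₁ ∪ P₂ ∪ P₃ = Set.univ)
    (hd₁₂ : Disjoint P₁ P₂) (hd₁₃ : Disjoint P₁ P₃) (hd₂₃ : Disjoint P₂ P₃)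
    (hlayers : ∀ k b, AvoidsLayer P₁ k b ∨ AvoidsLayer P₂ k b ∨ AvoidsLayer P₃ k b) :
    ∃ α : ι → Bool, ({P₁, P₂, P₃} : Set (Set (ι → Bool))) =
      {{α}, {fun k => !(α k)}, ({α, fun k => !(α k)} : Set (ι → Bool))ᶜ} := by
  let P : Fin 3 → Set (ι → Bool) := ![P₁, P₂, P₃]
  have range_eq : Set.range P = {P₁, P₂, P₃} := by
    simp only [P, Matrix.range_cons, Matrix.range_empty, Set.union_empty, Set.singleton_union]
  have hne : ∀ i, (P i).Nonempty := by simp [P, Fin.forall_fin_succ, *]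
  have hcoverP : ∀ x, ∃ i, x ∈ P i := by
    simpa [P, Fin.exists_fin_succ, Set.eq_univ_iff_forall, or_assoc] using hcover
  have hdisj : Pairwise (Disjoint on P) := by
    simp [P, Pairwise, Fin.forall_fin_succ, onFun, *, Disjoint.symm]
  have hlayersP : ∀ k b, ∃ i, AvoidsLayer (P i) k b := by
    simpa [P, Fin.exists_fin_succ] using hlayers
  obtain ⟨r, hr⟩ := exists_forall_pairwise_avoidOppositeLayers e hne hcoverP hlayersP
  rw [← range_eq]
  exact exists_range_eq_of_pairwise_avoidOppositeLayers hne hcoverP hdisj hr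

/-- Proposition 6: if `{P₁,P₂,P₃}` is a partition of the Boolean `n`-cube
(`n ≥ 4`) into three nonempty sets such that for every direction `k` and
every value `b` at least one of the layers `P₁|ₖᵇ`, `P₂|ₖᵇ`, `P₃|ₖᵇ` is
empty, then the partition is `{{ᾱ}, {¬ᾱ}, cube \ {ᾱ,¬ᾱ}}` for some vertex
`ᾱ` (`¬ᾱ` being its coordinatewise complement). -/
theorem partition_of_boolean_cube (n : ℕ) (hn : 4 ≤ n)
    (P₁ P₂ P₃ : Set (Fin n → Bool))
    (hne₁ : P₁.Nonempty) (hne₂ : P₂.Nonempty) (hne₃ : P₃.Nonempty)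
    (hcover : P₁ ∪ P₂ ∪ P₃ = Set.univ)
    (hd₁₂ : Disjoint P₁ P₂) (hd₁₃ : Disjoint P₁ P₃) (hd₂₃ : Disjoint P₂ P₃)
    (hlayers : ∀ (k : Fin n) (b : Bool),
      (∀ x ∈ P₁, x k ≠ b) ∨ (∀ x ∈ P₂, x k ≠ b) ∨ (∀ x ∈ P₃, x k ≠ b)) :
    ∃ α : Fin n → Bool,
      ({P₁, P₂, P₃} : Set (Set (Fin n → Bool))) =
        {{α}, {fun i => !(α i)},
          ({α, fun i => !(α i)} : Set (Fin n → Bool))ᶜ} := by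
  exact partition_of_boolean_cube_general (Fin.castLEEmb (by omega)) hne₁ hne₂ hne₃ hcover
    hd₁₂ hd₁₃ hd₂₃ hlayers
end

section
/- Let g be an n-quasigroup of order 4, let F(g) be the set of all n-quasigroups f with f(x̄) ≠ g(x̄) for every x̄ ∈ Σ^n, and let W_n be a set of n-quasigroups closed under equivalence, with W*_n its subset of reduced quasigroups. Then |F(g) ∩ W_n| ≤ 3^(n+1)·|W*_n|. -/
/-- An `n`-quasigroup of order 4. -/
def IsNQuasigroup {n : ℕ} (f : (Fin n → V4) → V4) : Prop :=
  ∀ (a : Fin n → V4) (i : Fin n) (b : V4),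
    ∃! x : V4, f (Function.update a i x) = b

/-- A reduced `n`-quasigroup: `f(0,…,0,a,0,…,0) = a`. -/
def IsReducedQ {n : ℕ} (f : (Fin n → V4) → V4) : Prop :=
  ∀ (i : Fin n) (a : V4), f (Function.update (fun _ => 0) i a) = a

/-- Equivalence of `n`-quasigroups:
`f(x₁,…,xₙ) = τ₀(g(τ₁ x_{σ(1)},…,τₙ x_{σ(n)}))`. -/
def QEquiv {n : ℕ} (f g : (Fin n → V4) → V4) : Prop :=
  ∃ (σ : Equiv.Perm (Fin n)) (τ₀ : Equiv.Perm V4) (τ : Fin n → Equiv.Perm V4),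
    ∀ x : Fin n → V4, f x = τ₀ (g fun i => τ i (x (σ i)))

/-- A set of `n`-quasigroups is closed under equivalence if it contains each
member's whole equivalence class. -/
def ClosedUnderEquiv {n : ℕ} (W : Set ((Fin n → V4) → V4)) : Prop :=
  ∀ f ∈ W, ∀ g : (Fin n → V4) → V4, IsNQuasigroup g → QEquiv f g → g ∈ W

/-!
Call `f(0, …, 0, x, 0, …, 0)`, with `x` in position `i`, the `i`-th line of `f`. An `n`-quasigroup
is determined by its value `c` at the origin, its `n` lines and its reduction, the reduced isotope
obtained by undoing the lines. If `f` differs from `g` everywhere, then `c ≠ g 0`, and composing the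
`i`-th line of `f` with the inverse of that of `g` gives a derangement sending `g 0` to `c`.
Conjugation permutes the values `c ≠ g 0` transitively, so on `k + 2` letters each of them is taken
by `D(k + 2) / (k + 1) = D(k) + D(k + 1)` derangements, where `D` counts derangements. On four
letters there are three values of `c`, and `D(2) + D(3) = 3` lines for each of them in each
direction.
-/

open Equiv Finset

section Derangements

variable {α : Type*} [Fintype α] [DecidableEq α]

lemma card_derangements_apply_eq_congr {b c c' : α} (hc : c ≠ b) (hc' : c' ≠ b) :
    #{δ : Perm α | (∀ x, δ x ≠ x) ∧ δ b = c} = #{δ : Perm α | (∀ x, δ x ≠ x) ∧ δ b = c'} := by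
  refine card_equiv (MulAut.conj (swap c c')).toEquiv fun δ => ?_
  have conj_fixes_iff (x : α) :
      swap c c' (δ (swap c c' x)) = x ↔ δ (swap c c' x) = swap c c' x :=
    swap_apply_eq_iff
  have conj_apply_iff : swap c c' (δ (swap c c' b)) = c' ↔ δ b = c := by
    rw [swap_apply_of_ne_of_ne hc.symm hc'.symm, swap_apply_eq_iff, swap_apply_right]
  simp only [mem_filter_univ, MulEquiv.toEquiv_eq_coe, EquivLike.coe_coe, MulAut.conj_apply,
    swap_inv, Perm.mul_apply, ne_eq, conj_fixes_iff, conj_apply_iff]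
  rw [(swap c c').forall_congr_left (p := fun x => ¬δ x = x)]
  simp

lemma card_derangements_apply_eq {k : ℕ} (hα : Fintype.card α = k + 2) {b c : α} (hc : c ≠ b) :
    #{δ : Perm α | (∀ x, δ x ≠ x) ∧ δ b = c} = numDerangements k + numDerangements (k + 1) := by
  have maps_to : ∀ δ ∈ ({δ | ∀ x, δ x ≠ x} : Finset (Perm α)), δ b ∈ univ.erase b := by
    simp +contextual
  have card_total : #{δ : Perm α | ∀ x, δ x ≠ x} = numDerangements (k + 2) := by
    rw [← hα, ← card_derangements_eq_numDerangements, ← Fintype.card_subtype]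
    rfl
  rw [card_eq_sum_card_fiberwise maps_to, sum_const_nat
    (m := #{δ : Perm α | (∀ x, δ x ≠ x) ∧ δ b = c}), card_erase_of_mem (mem_univ b), card_univ, hα,
    numDerangements_add_two] at card_total
  · exact Nat.eq_of_mul_eq_mul_left k.succ_pos card_total
  · intro c' hc'
    rw [filter_filter]
    exact card_derangements_apply_eq_congr (ne_of_mem_erase hc') hc

lemma card_perm_avoiding_apply_eq {k : ℕ} (hα : Fintype.card α = k + 2) (γ : Perm α) {a c : α}
    (hc : c ≠ γ a) :
    #{π : Perm α | (∀ x, π x ≠ γ x) ∧ π a = c} = numDerangements k + numDerangements (k + 1) := by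
  rw [← card_derangements_apply_eq hα hc]
  refine card_equiv (Equiv.mulRight γ⁻¹) fun π => ?_
  rw [mem_filter_univ, mem_filter_univ, γ.forall_congr_left]
  simp

end Derangements

lemma card_pi_perm_avoiding_apply_eq {ι α : Type*} [Fintype ι] [Fintype α] {k : ℕ}
    (hα : Fintype.card α = k + 2) (γ : ι → Perm α) {a c : α} (hc : ∀ i, c ≠ γ i a) :
    Nat.card ((i : ι) → {π : Perm α // (∀ x, π x ≠ γ i x) ∧ π a = c}) =
      (numDerangements k + numDerangements (k + 1)) ^ Fintype.card ι := by
  classical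
  rw [Nat.card_pi, ← card_univ, ← prod_const]
  refine prod_congr rfl fun i _ => ?_
  rw [Nat.card_eq_fintype_card, Fintype.card_subtype]
  exact card_perm_avoiding_apply_eq hα (γ i) (hc i)

section Quasigroups

variable {ι α : Type*}

/-- The isotope of `f` by a permutation `τ₀` of the values and permutations `τ i` of the arguments:
an equivalence in the sense of `QEquiv` that does not permute coordinates. -/
def isotope (τ₀ : Perm α) (τ : ι → Perm α) (f : (ι → α) → α) : (ι → α) → α :=
  fun x => τ₀ (f fun i => τ i (x i))

lemma isotope_injective (τ₀ : Perm α) (τ : ι → Perm α) : Function.Injective (isotope τ₀ τ) := by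
  intro f f' h
  funext x
  have := congrFun h fun i => (τ i)⁻¹ (x i)
  simpa [isotope] using this

variable [DecidableEq ι]

/-- An `ι`-ary quasigroup on an arbitrary alphabet `α`. `IsNQuasigroup` is the case `ι = Fin n`,
`α = Fin 4`. -/
def IsPolyadicQuasigroup (f : (ι → α) → α) : Prop :=
  ∀ (a : ι → α) (i : ι) (b : α), ∃! x : α, f (Function.update a i x) = b

/-- An operation whose restriction to each coordinate axis is the identity. `IsReducedQ` is the case
`ι = Fin n`, `α = Fin 4`. -/
def IsReducedOperation [Zero α] (f : (ι → α) → α) : Prop :=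
  ∀ (i : ι) (a : α), f (Pi.single i a) = a

namespace IsPolyadicQuasigroup

variable {f f' : (ι → α) → α}

lemma bijective_update (hf : IsPolyadicQuasigroup f) (a : ι → α) (i : ι) :
    Function.Bijective fun x => f (Function.update a i x) :=
  (Function.bijective_iff_existsUnique _).2 (hf a i)

protected lemma isotope (hf : IsPolyadicQuasigroup f) (τ₀ : Perm α) (τ : ι → Perm α) :
    IsPolyadicQuasigroup (isotope τ₀ τ f) := by
  intro a i b
  simp only [_root_.isotope, Function.apply_update fun j => τ j]
  exact (τ₀.bijective.comp <|
    (hf.bijective_update (fun j => τ j (a j)) i).comp (τ i).bijective).existsUnique b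

variable [Zero α]

/-- The `i`-th line of `f`: its restriction to the `i`-th coordinate axis, as a permutation. -/
noncomputable def linePerm (hf : IsPolyadicQuasigroup f) (i : ι) : Perm α :=
  Equiv.ofBijective (fun x => f (Pi.single i x)) (hf.bijective_update 0 i)

lemma linePerm_apply (hf : IsPolyadicQuasigroup f) (i : ι) (x : α) :
    hf.linePerm i x = f (Pi.single i x) := rfl

lemma linePerm_zero (hf : IsPolyadicQuasigroup f) (i : ι) : hf.linePerm i 0 = f 0 := by
  rw [linePerm_apply, Pi.single_zero]

variable [DecidableEq α]

/-- The isotope of `f` that undoes the lines of `f`, and is therefore reduced. Swapping `0` with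
`f 0` makes the permutations of the arguments fix `0`. -/
noncomputable def reduction (hf : IsPolyadicQuasigroup f) : (ι → α) → α :=
  isotope (swap 0 (f 0)) (fun i => (hf.linePerm i)⁻¹ * swap 0 (f 0)) f

lemma isReducedOperation_reduction (hf : IsPolyadicQuasigroup f) :
    IsReducedOperation hf.reduction := by
  intro i a
  have arg_zero (j : ι) : ((hf.linePerm j)⁻¹ * swap 0 (f 0)) 0 = 0 := by
    rw [Perm.mul_apply, swap_apply_left, Perm.inv_eq_iff_eq, hf.linePerm_zero]
  have arg_single : (fun j => ((hf.linePerm j)⁻¹ * swap 0 (f 0)) ((Pi.single i a : ι → α) j)) =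
      Pi.single i (((hf.linePerm i)⁻¹ * swap 0 (f 0)) a) :=
    funext fun j => Pi.apply_single (fun j => (hf.linePerm j)⁻¹ * swap 0 (f 0)) arg_zero i a j
  rw [reduction, isotope, arg_single, ← hf.linePerm_apply]
  simp

lemma eq_of_reduction_eq (hf : IsPolyadicQuasigroup f) (hf' : IsPolyadicQuasigroup f')
    (h_zero : f 0 = f' 0) (h_line : hf.linePerm = hf'.linePerm)
    (h_reduction : hf.reduction = hf'.reduction) : f = f' := by
  rw [reduction, reduction, h_zero, h_line] at h_reduction
  exact isotope_injective _ _ h_reduction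

end IsPolyadicQuasigroup

variable [Zero α] [Fintype ι] [Fintype α] {k : ℕ} {g : (ι → α) → α} {W : Set ((ι → α) → α)}

lemma card_compatible_apply_zero_eq_le (hα : Fintype.card α = k + 2)
    (hg : IsPolyadicQuasigroup g) (hcl : ∀ f ∈ W, ∀ τ₀ τ, isotope τ₀ τ f ∈ W) {c : α}
    (hc : c ≠ g 0) :
    Nat.card {f // (IsPolyadicQuasigroup f ∧ (∀ x, f x ≠ g x) ∧ f ∈ W) ∧ f 0 = c} ≤
      (numDerangements k + numDerangements (k + 1)) ^ Fintype.card ι *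
        Nat.card {f // f ∈ W ∧ IsReducedOperation f} := by
  classical
  have hc_line (i : ι) : c ≠ hg.linePerm i 0 := by rwa [hg.linePerm_zero]
  rw [← card_pi_perm_avoiding_apply_eq hα hg.linePerm hc_line, ← Nat.card_prod]
  let linesAndReduction :
      {f // (IsPolyadicQuasigroup f ∧ (∀ x, f x ≠ g x) ∧ f ∈ W) ∧ f 0 = c} →
        ((i : ι) → {π : Perm α // (∀ x, π x ≠ hg.linePerm i x) ∧ π 0 = c}) ×
          {f // f ∈ W ∧ IsReducedOperation f} :=
    fun ⟨_, ⟨hf, hfg, hfW⟩, hfc⟩ =>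
      (fun i => ⟨hf.linePerm i, fun x => hfg (Pi.single i x), (hf.linePerm_zero i).trans hfc⟩,
        ⟨hf.reduction, hcl _ hfW _ _, hf.isReducedOperation_reduction⟩)
  refine Nat.card_le_card_of_injective linesAndReduction ?_
  rintro ⟨f, ⟨hf, _, _⟩, hfc⟩ ⟨f', ⟨hf', _, _⟩, hfc'⟩ h
  obtain ⟨h_lines, h_reduction⟩ := Prod.mk.inj h
  exact Subtype.ext <| hf.eq_of_reduction_eq hf' (hfc.trans hfc'.symm)
    (funext fun i => congrArg Subtype.val (congrFun h_lines i)) (congrArg Subtype.val h_reduction)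

theorem card_compatible_bound_general (hα : Fintype.card α = k + 2)
    (hg : IsPolyadicQuasigroup g) (hcl : ∀ f ∈ W, ∀ τ₀ τ, isotope τ₀ τ f ∈ W) :
    Nat.card {f // IsPolyadicQuasigroup f ∧ (∀ x, f x ≠ g x) ∧ f ∈ W} ≤
      (k + 1) * (numDerangements k + numDerangements (k + 1)) ^ Fintype.card ι *
        Nat.card {f // f ∈ W ∧ IsReducedOperation f} := by
  classical
  have card_values : #(univ.erase (g 0)) = k + 1 := by
    rw [card_erase_of_mem (mem_univ _), card_univ, hα]
    rfl
  rw [mul_assoc, mul_comm (k + 1), Nat.card_eq_fintype_card, Fintype.card_subtype]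
  refine (card_le_mul_card_image_of_maps_to (f := fun f => f 0) (t := univ.erase (g 0))
    (fun f hf => ?_) _ fun c hc => ?_).trans_eq (by rw [card_values])
  · obtain ⟨-, hfg, -⟩ := (mem_filter_univ f).1 hf
    exact mem_erase.2 ⟨hfg 0, mem_univ _⟩
  · rw [filter_filter, ← Fintype.card_subtype, ← Nat.card_eq_fintype_card]
    exact card_compatible_apply_zero_eq_le hα hg hcl (ne_of_mem_erase hc)

end Quasigroups

lemma ClosedUnderEquiv.isotope_mem {n : ℕ} {W : Set ((Fin n → V4) → V4)} (hcl : ClosedUnderEquiv W)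
    {f : (Fin n → V4) → V4} (hf : f ∈ W) (hfq : IsNQuasigroup f) (τ₀ : Perm V4)
    (τ : Fin n → Perm V4) : isotope τ₀ τ f ∈ W := by
  have hq : IsPolyadicQuasigroup f := hfq
  refine hcl f hf _ (hq.isotope τ₀ τ) ⟨1, τ₀⁻¹, fun i => (τ i)⁻¹, fun x => ?_⟩
  simp [isotope]

/-- Proposition 11: if `g` is an `n`-quasigroup and `W` is a set of
`n`-quasigroups closed under equivalence, then the number of members of `W`
that are compatible with `g` (i.e. differ from `g` everywhere) is at most
`3^(n+1)` times the number of reduced members of `W`. -/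
theorem card_compatible_bound (n : ℕ)
    (g : (Fin n → V4) → V4) (hg : IsNQuasigroup g)
    (W : Set ((Fin n → V4) → V4))
    (hW : ∀ f ∈ W, IsNQuasigroup f) (hcl : ClosedUnderEquiv W) :
    Nat.card {f : (Fin n → V4) → V4 //
        IsNQuasigroup f ∧ (∀ x : Fin n → V4, f x ≠ g x) ∧ f ∈ W} ≤
      3 ^ (n + 1) *
        Nat.card {f : (Fin n → V4) → V4 // f ∈ W ∧ IsReducedQ f} := by
  calc
    _ ≤ (2 + 1) * (numDerangements 2 + numDerangements 3) ^ Fintype.card (Fin n) * _ :=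
      card_compatible_bound_general (Fintype.card_fin 4) hg
        fun f hf => hcl.isotope_mem hf (hW f hf)
    _ = _ := by
      rw [Fintype.card_fin, pow_succ']
      rfl
end

section
/- Let r*_n be the number of reduced decomposable n-quasigroups of order 4 and v*_m the number of reduced m-quasigroups of order 4. Then r*_n ≤ Σ_{m=2}^{n−1} C(n,m)·v*_{n−m+1}·v*_m, where C(n,m) is the binomial coefficient. -/
/-- A decomposable `n`-quasigroup:
`f(x₁,…,xₙ) = h(g(x_{σ(1)},…,x_{σ(m)}), x_{σ(m+1)},…,x_{σ(n)})` for some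
`2 ≤ m < n`, an `(n−m+1)`-quasigroup `h`, an `m`-quasigroup `g` and a
permutation `σ`. -/
def IsDecomposable {n : ℕ} (f : (Fin n → V4) → V4) : Prop :=
  ∃ (m : ℕ) (_ : 2 ≤ m) (hm : m < n)
    (h : (Fin (n - m + 1) → V4) → V4) (g : (Fin m → V4) → V4)
    (σ : Equiv.Perm (Fin n)),
    IsNQuasigroup h ∧ IsNQuasigroup g ∧
    ∀ x : Fin n → V4,
      f x = h (Fin.cons (g fun j => x (σ ⟨j.1, j.2.trans hm⟩))
        (fun j : Fin (n - m) => x (σ ⟨m + j.1, by have := j.2; omega⟩)))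

/-- The number of reduced `k`-quasigroups of order 4. -/
noncomputable def vStar (k : ℕ) : ℕ :=
  Nat.card {f : (Fin k → V4) → V4 // IsNQuasigroup f ∧ IsReducedQ f}

/-!
Setting arguments of a reduced quasigroup to zero leaves a reduced quasigroup. If `f` is reduced and
`f x = h (g x_S, x_T)` with `T` the complement of `S`, replace `g` by the retract
`g' x_S = f (x_S, 0)` and `h` by the retract `h'` of `f` to `T` together with a single argument
`z ∈ S`. Moving the value `c = g' x_S` to the argument `z` and zero to the rest of `S` does not
change `f (x_S, 0)`, since `f` is reduced; as `h` is injective in its first argument, it does not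
change `g x_S` either, and hence not `f x`. So `f x = h' (g' x_S, x_T)`, and `f` is determined by
`S`, `h'` and `g'`.
-/

section Extend

variable {ι κ α : Type*} {k : ℕ}

theorem extend_update [DecidableEq ι] [DecidableEq κ] {p : κ → ι} (hp : p.Injective)
    (y : κ → α) (w : ι → α) (i : κ) (a : α) :
    Function.extend p (Function.update y i a) w =
      Function.update (Function.extend p y w) (p i) a := by
  funext b
  by_cases hb : ∃ j, p j = b
  · obtain ⟨j, rfl⟩ := hb
    simp only [hp.extend_apply, Function.update_apply, hp.eq_iff]
  · rw [Function.extend_apply' _ _ _ hb, Function.update_of_ne (fun h => hb ⟨i, h.symm⟩),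
      Function.extend_apply' _ _ _ hb]

theorem extend_comp_eq_indicator_range [Zero α] {p : κ → ι} (hp : p.Injective) (x : ι → α) :
    Function.extend p (x ∘ p) 0 = (Set.range p).indicator x := by
  funext b
  by_cases hb : b ∈ Set.range p
  · obtain ⟨j, rfl⟩ := hb
    rw [hp.extend_apply, Set.indicator_of_mem (Set.mem_range_self j), Function.comp_apply]
  · rw [Set.indicator_of_notMem hb, Function.extend_apply' _ _ _ hb, Pi.zero_apply]

theorem indicator_extend_cons_eq_single [DecidableEq ι] [Zero α] {S : Set ι} {i : ι}
    {q : Fin k → ι} (hinj : Function.Injective (Fin.cons i q : Fin (k + 1) → ι)) (hi : i ∈ S)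
    (hqS : ∀ j, q j ∉ S) (c : α) (y : Fin k → α) :
    S.indicator (Function.extend (Fin.cons i q : Fin (k + 1) → ι)
        (Fin.cons c y : Fin (k + 1) → α) 0) =
      Pi.single i c := by
  funext b
  by_cases hbi : b = i
  · subst hbi
    rw [Set.indicator_of_mem hi, Pi.single_eq_same]
    exact hinj.extend_apply (Fin.cons c y) 0 0
  rw [Pi.single_eq_of_ne hbi, Set.indicator_apply_eq_zero]
  intro hb
  apply Function.extend_apply'
  rintro ⟨j, rfl⟩
  cases j using Fin.cases with
  | zero => exact hbi rfl
  | succ j => exact hqS j hb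

end Extend

section Block

variable {ι κ α β : Type*} [Zero α] {k : ℕ}

/-- The retract of `f` to the arguments listed by `p`: all other arguments are set to zero. -/
noncomputable def retract (p : κ → ι) (f : (ι → α) → β) (y : κ → α) : β :=
  f (Function.extend p y 0)

/-- The superposition `x ↦ h (g x_p, x_q)`, where `g` takes the arguments listed by `p` and `h`
takes the value of `g` followed by the arguments listed by `q`. -/
def blockCompose (p : κ → ι) (q : Fin k → ι) (h : (Fin (k + 1) → α) → β)
    (g : (κ → α) → α) (x : ι → α) : β :=
  h (Fin.cons (g (x ∘ p)) (x ∘ q))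

/-- `f x` depends on the arguments in `S` only through the value that `f` takes when all arguments
outside `S` are set to zero. Unlike a factorization `h (g x_S, x_T)`, this does not refer to an
ordering of `S` or of its complement. -/
def FactorsThroughBlock (f : (ι → α) → β) (S : Set ι) : Prop :=
  ∀ ⦃x x' : ι → α⦄, f (S.indicator x) = f (S.indicator x') → Set.EqOn x x' Sᶜ → f x = f x'

theorem factorsThroughBlock_blockCompose {S : Set ι} {p : κ → ι} {q : Fin k → ι}
    {h : (Fin (k + 1) → α) → β} (hh : Function.Injective fun c => h (Fin.cons c 0))
    (g : (κ → α) → α) (hp : ∀ j, p j ∈ S) (hq : ∀ j, q j ∉ S) :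
    FactorsThroughBlock (blockCompose p q h g) S := by
  have inside (x : ι → α) : S.indicator x ∘ p = x ∘ p :=
    funext fun j => Set.indicator_of_mem (hp j) x
  have outside (x : ι → α) : S.indicator x ∘ q = 0 :=
    funext fun j => Set.indicator_of_notMem (hq j) x
  intro x x' hblock hrest
  simp only [blockCompose, inside, outside] at hblock
  have hg : g (x ∘ p) = g (x' ∘ p) := hh hblock
  have hxq : x ∘ q = x' ∘ q := funext fun j => hrest (hq j)
  rw [blockCompose, blockCompose, hg, hxq]

theorem FactorsThroughBlock.eq_blockCompose_retract [DecidableEq ι] {f : (ι → α) → α}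
    {p : κ → ι} {q : Fin k → ι} {z : κ} (hf : FactorsThroughBlock f (Set.range p))
    (hp : p.Injective) (hinj : Function.Injective (Fin.cons (p z) q : Fin (k + 1) → ι))
    (hpq : Set.range q = (Set.range p)ᶜ) (hz : ∀ a, f (Pi.single (p z) a) = a) :
    f = blockCompose p q (retract (Fin.cons (p z) q) f) (retract p f) := by
  have hqS (j : Fin k) : q j ∉ Set.range p := hpq.subset ⟨j, rfl⟩
  funext x
  apply hf
  · rw [indicator_extend_cons_eq_single hinj (Set.mem_range_self z) hqS, hz, retract,
      extend_comp_eq_indicator_range hp]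
  · rw [← hpq]
    rintro _ ⟨j, rfl⟩
    exact (hinj.extend_apply (Fin.cons _ (x ∘ q)) 0 j.succ).symm

end Block

section Quasigroup

variable {n k : ℕ} {f : (Fin n → V4) → V4}

theorem isNQuasigroup_retract (hf : IsNQuasigroup f) {p : Fin k → Fin n} (hp : p.Injective) :
    IsNQuasigroup (retract p f) := by
  intro a i b
  simp only [retract, extend_update hp]
  exact hf _ _ _

theorem isReducedQ_retract (hf : IsReducedQ f) {p : Fin k → Fin n} (hp : p.Injective) :
    IsReducedQ (retract p f) := by
  intro i a
  have hzero : Function.extend p (fun _ => (0 : V4)) 0 = fun _ => 0 := Function.extend_const p 0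
  rw [retract, extend_update hp, hzero]
  exact hf (p i) a

theorem IsNQuasigroup.injective_cons {h : (Fin (k + 1) → V4) → V4} (hh : IsNQuasigroup h)
    (y : Fin k → V4) : Function.Injective fun c => h (Fin.cons c y) := by
  intro c c' hc
  apply (hh (Fin.cons 0 y) 0 (h (Fin.cons c' y))).unique <;> rw [Fin.update_cons_zero]
  exact hc

theorem IsDecomposable.exists_factorsThroughBlock (hf : IsDecomposable f) :
    ∃ m ∈ Finset.Icc 2 (n - 1), ∃ S : Set.powersetCard (Fin n) m,
      FactorsThroughBlock f (S : Set (Fin n)) := by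
  obtain ⟨m, hm2, hmn, h, g, σ, hh, -, hfhg⟩ := hf
  have hf : f = blockCompose (fun j : Fin m => σ ⟨j, j.2.trans hmn⟩)
      (fun j : Fin (n - m) => σ ⟨m + j, by omega⟩) h g := funext hfhg
  let S := Set.powersetCard.ofFinEmb m (Fin n) ((Fin.castLEEmb hmn.le).trans σ.toEmbedding)
  refine ⟨m, Finset.mem_Icc.2 ⟨hm2, Nat.le_sub_one_of_lt hmn⟩, S, hf ▸ ?_⟩
  refine factorsThroughBlock_blockCompose (hh.injective_cons 0) g ?_ ?_
  · intro j
    exact (Set.powersetCard.mem_ofFinEmb_iff_mem_range _ _ _ _).2 ⟨j, rfl⟩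
  · intro j hj
    obtain ⟨i, hi⟩ := (Set.powersetCard.mem_ofFinEmb_iff_mem_range _ _ _ _).1 hj
    have hij : (i : ℕ) = m + j := congrArg Fin.val (σ.injective hi)
    omega

end Quasigroup

section Counting

variable {n m : ℕ}

/-- The reduced `k`-quasigroups of order 4, counted by `vStar k`. -/
abbrev ReducedQuasigroup (k : ℕ) : Type :=
  {f : (Fin k → V4) → V4 // IsNQuasigroup f ∧ IsReducedQ f}

/-- The increasing enumeration of the complement of an `m`-subset of `Fin n`. -/
def complEnum (S : Set.powersetCard (Fin n) m) : Fin (n - m) ↪o Fin n :=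
  S.valᶜ.orderEmbOfFin (by rw [Finset.card_compl, Set.powersetCard.card_eq, Fintype.card_fin])

theorem range_complEnum (S : Set.powersetCard (Fin n) m) :
    Set.range (complEnum S) = (S : Set (Fin n))ᶜ := by
  rw [complEnum, Finset.range_orderEmbOfFin, Finset.coe_compl, Set.powersetCard.coe_coe]

/-- The data of a decomposition into reduced quasigroups: the block size `m`, the block of `m`
arguments, the outer and the inner quasigroup. -/
abbrev ReducedDecomposition (n : ℕ) : Type :=
  Σ m : Finset.Icc 2 (n - 1),
    Set.powersetCard (Fin n) m × ReducedQuasigroup (n - m + 1) × ReducedQuasigroup m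

/-- The function `h (g x_S, x_T)` described by a decomposition, with `S` and its complement `T`
enumerated increasingly. -/
def ReducedDecomposition.superposition (d : ReducedDecomposition n) : (Fin n → V4) → V4 :=
  let ⟨_, S, h, g⟩ := d
  blockCompose (Set.powersetCard.ofFinEmbEquiv.symm S) (complEnum S) h.1 g.1

theorem IsDecomposable.mem_range_superposition {f : (Fin n → V4) → V4} (hd : IsDecomposable f)
    (hq : IsNQuasigroup f) (hr : IsReducedQ f) :
    f ∈ Set.range (ReducedDecomposition.superposition (n := n)) := by
  obtain ⟨m, hm, S, hS⟩ := hd.exists_factorsThroughBlock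
  let p := Set.powersetCard.ofFinEmbEquiv.symm S
  have hp : Set.range p = S :=
    Set.ext (Set.powersetCard.mem_range_ofFinEmbEquiv_symm_iff_mem S)
  let z : Fin m := ⟨0, zero_lt_two.trans_le (Finset.mem_Icc.1 hm).1⟩
  have hz : p z ∉ Set.range (complEnum S) := by
    rw [range_complEnum, ← hp]
    exact fun h => h ⟨z, rfl⟩
  have houter := Fin.cons_injective_of_injective hz (complEnum S).injective
  refine ⟨⟨⟨m, hm⟩, S, ⟨_, isNQuasigroup_retract hq houter, isReducedQ_retract hr houter⟩,
    ⟨_, isNQuasigroup_retract hq p.injective, isReducedQ_retract hr p.injective⟩⟩, ?_⟩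
  symm
  refine FactorsThroughBlock.eq_blockCompose_retract ?_ p.injective houter ?_ (hr (p z))
  · rwa [hp]
  · rw [hp, range_complEnum]

theorem card_reducedDecomposition (n : ℕ) :
    Nat.card (ReducedDecomposition n) =
      ∑ m ∈ Finset.Icc 2 (n - 1), n.choose m * vStar (n - m + 1) * vStar m := by
  rw [Nat.card_sigma, ← Finset.sum_coe_sort (Finset.Icc 2 (n - 1))]
  refine Finset.sum_congr rfl fun m _ => ?_
  rw [Nat.card_prod, Nat.card_prod, Set.powersetCard.card, Nat.card_fin, mul_assoc, vStar, vStar]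

end Counting

/-- Proposition 13: the number of reduced decomposable `n`-quasigroups
satisfies `r*_n ≤ ∑_{m=2}^{n−1} C(n,m)·v*_{n−m+1}·v*_m`. -/
theorem card_reduced_decomposable_bound (n : ℕ) :
    Nat.card {f : (Fin n → V4) → V4 //
        IsNQuasigroup f ∧ IsDecomposable f ∧ IsReducedQ f} ≤
      ∑ m ∈ Finset.Icc 2 (n - 1),
        n.choose m * vStar (n - m + 1) * vStar m := by
  calc
    _ ≤ Nat.card (Set.range (ReducedDecomposition.superposition (n := n))) :=
      Nat.card_mono (Set.toFinite _) fun _ hf => hf.2.1.mem_range_superposition hf.1 hf.2.2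
    _ ≤ Nat.card (ReducedDecomposition n) := Finite.card_range_le _
    _ = _ := card_reducedDecomposition n
end

section
/- For every n ≥ 1 there is exactly one reduced linear n-quasigroup of order 4. -/
/-- `S_{a,b}(f)`. -/
def SCode {n : ℕ} (f : (Fin n → V4) → V4) (a b : V4) : Set (Fin n → V4) :=
  {x | f x = a ∨ f x = b}

/-- A linear double-code. -/
def IsLinearDoubleCode {n : ℕ} (S : Set (Fin n → V4)) : Prop :=
  ∃ T : Fin n → Finset V4, (∀ i, (T i).card = 2) ∧
    ∀ x : Fin n → V4, x ∈ S ↔ (∑ i, if x i ∈ T i then (1 : ZMod 2) else 0) = 1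

/-- A linear `n`-quasigroup: `S_{a,b}(f)` is a linear double-code for all
`a ≠ b`. -/
def IsLinearQ {n : ℕ} (f : (Fin n → V4) → V4) : Prop :=
  ∀ a b : V4, a ≠ b → IsLinearDoubleCode (SCode f a b)

/-!
Writing the symbols `0, 1, 2, 3` in binary identifies the alphabet with the Klein four-group
`ZMod 2 × ZMod 2`. For `c ≠ 0`, the set `{0, c}` is the kernel of the character `ω(c, ·)`, where `ω`
is the determinant form. If `f` is linear, then the double-code `S_{0,c}(f)` shows that `ω(c, f x)`
is, up to a constant, a sum of functions of the single coordinates; if `f` is also reduced, these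
functions are determined by the values of `f` on the coordinate axes, so
`ω(c, f x) = ∑ i, ω(c, x i)`. The characters `ω(c, ·)` separate points, so `f` is the sum in the
Klein group. Conversely that sum is linear, because every pair `{a, b}` is a level set of
`ω(a + b, ·)`.
-/

section SeparableSums

open Finset

variable {ι G : Type*} {α : ι → Type*} [Fintype ι] [DecidableEq ι]

theorem sum_apply_update [AddCommMonoid G] (F : ∀ i, α i → G) (a : ∀ i, α i) (i : ι) (v : α i) :
    ∑ j, F j (Function.update a i v j) = F i v + ∑ j ∈ univ \ {i}, F j (a j) := by
  simp only [Function.apply_update F, sum_update_of_mem (mem_univ i)]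

theorem sub_eq_sum_update_sub_of_eq_const_add_sum [AddCommGroup G] {h : (∀ i, α i) → G} {k : G}
    {F : ∀ i, α i → G} (hF : ∀ x, h x = k + ∑ i, F i (x i)) (o x : ∀ i, α i) :
    h x - h o = ∑ i, (h (Function.update o i (x i)) - h o) := by
  have sub_along_axis (i : ι) :
      h (Function.update o i (x i)) - h o = F i (x i) - F i (o i) := by
    have h_origin := sum_apply_update F o i (o i)
    rw [Function.update_eq_self] at h_origin
    rw [hF, hF, sum_apply_update, h_origin]
    abel
  rw [sum_congr rfl fun i _ => sub_along_axis i, sum_sub_distrib, hF, hF, add_sub_add_left_eq_sub]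

end SeparableSums

theorem zmod_two_ite_eq_one (z : ZMod 2) : (if z = 1 then (1 : ZMod 2) else 0) = z := by
  decide +revert

/-- The identification of the alphabet with the Klein four-group by binary digits,
`v ↦ (v / 2, v % 2)`. It relies on `ZMod 2` being `Fin 2` by definition. -/
def kleinEquiv : V4 ≃ ZMod 2 × ZMod 2 :=
  (finProdFinEquiv (m := 2) (n := 2)).symm

/-- The determinant form of the Klein four-group, carried over to the alphabet. For `c ≠ 0` the map
`kleinForm c` is the character of the group with kernel `{0, c}`. -/
def kleinForm (c v : V4) : ZMod 2 :=
  (kleinEquiv c).1 * (kleinEquiv v).2 - (kleinEquiv c).2 * (kleinEquiv v).1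

/-- Summation in the Klein four-group, carried over to the alphabet: the reduced linear
quasigroup. -/
def kleinSum {ι : Type*} [Fintype ι] (x : ι → V4) : V4 :=
  kleinEquiv.symm (∑ i, kleinEquiv (x i))

theorem kleinEquiv_zero : kleinEquiv 0 = 0 := rfl

theorem kleinForm_zero_right (c : V4) : kleinForm c 0 = 0 := by
  simp [kleinForm, kleinEquiv_zero]

theorem kleinForm_eq_zero_iff {c : V4} (hc : c ≠ 0) (v : V4) :
    kleinForm c v = 0 ↔ v = 0 ∨ v = c := by
  decide +revert

theorem eq_of_forall_kleinForm_eq {u v : V4} (h : ∀ c ≠ 0, kleinForm c u = kleinForm c v) :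
    u = v := by
  decide +revert

theorem card_filter_kleinForm_eq {c : V4} (hc : c ≠ 0) (e : ZMod 2) :
    (Finset.univ.filter fun v => kleinForm c v = e).card = 2 := by
  decide +revert

theorem exists_forall_kleinForm_eq_iff {a b : V4} (hab : a ≠ b) :
    ∃ c ≠ 0, ∀ v, kleinForm c v = kleinForm c a ↔ v = a ∨ v = b := by
  decide +revert

theorem kleinForm_kleinSum {ι : Type*} [Fintype ι] (c : V4) (x : ι → V4) :
    kleinForm c (kleinSum x) = ∑ i, kleinForm c (x i) := by
  simp only [kleinForm, kleinSum, Equiv.apply_symm_apply, Prod.fst_sum, Prod.snd_sum,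
    Finset.mul_sum, Finset.sum_sub_distrib]

section Quasigroups

variable {n : ℕ}

theorem isNQuasigroup_kleinSum : IsNQuasigroup (kleinSum : (Fin n → V4) → V4) := by
  intro a i b
  have solve (v : V4) : kleinSum (Function.update a i v) = b ↔
      v = kleinEquiv.symm (kleinEquiv b - ∑ j ∈ Finset.univ \ {i}, kleinEquiv (a j)) := by
    rw [kleinSum, sum_apply_update (fun _ => kleinEquiv), Equiv.symm_apply_eq,
      Equiv.eq_symm_apply, eq_sub_iff_add_eq]
  simp only [solve, existsUnique_eq]

theorem isReducedQ_kleinSum : IsReducedQ (kleinSum : (Fin n → V4) → V4) := by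
  intro i a
  rw [kleinSum, sum_apply_update (fun _ => kleinEquiv), Equiv.symm_apply_eq]
  simp only [kleinEquiv_zero, Finset.sum_const_zero, add_zero]

theorem isLinearDoubleCode_sum_kleinForm_eq (i₀ : Fin n) {c : V4} (hc : c ≠ 0) (e : ZMod 2) :
    IsLinearDoubleCode {x : Fin n → V4 | ∑ i, kleinForm c (x i) = e} := by
  -- Replacing `T i₀` by its complement shifts the sum of the indicators by `1`.
  let shift : Fin n → ZMod 2 := Pi.single i₀ (1 - e)
  refine ⟨fun i => Finset.univ.filter fun v => kleinForm c v = 1 - shift i,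
    fun i => card_filter_kleinForm_eq hc _, fun x => ?_⟩
  have sum_shift : ∑ i, shift i = 1 - e := Fintype.sum_pi_single' i₀ (1 - e)
  simp only [Finset.mem_filter_univ, eq_sub_iff_add_eq, zmod_two_ite_eq_one,
    Finset.sum_add_distrib, sum_shift, Set.mem_ofPred_eq]
  rw [← eq_sub_iff_add_eq, sub_sub_cancel]

theorem isLinearQ_kleinSum (hn : 1 ≤ n) : IsLinearQ (kleinSum : (Fin n → V4) → V4) := by
  intro a b hab
  obtain ⟨c, hc, level_set⟩ := exists_forall_kleinForm_eq_iff hab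
  have scode_eq : SCode kleinSum a b =
      {x : Fin n → V4 | ∑ i, kleinForm c (x i) = kleinForm c a} := by
    ext x
    rw [Set.mem_ofPred_eq, ← kleinForm_kleinSum, level_set]
    rfl
  rw [scode_eq]
  exact isLinearDoubleCode_sum_kleinForm_eq ⟨0, hn⟩ hc _

variable {f : (Fin n → V4) → V4}

theorem IsReducedQ.map_zero (hf : IsReducedQ f) (hn : 1 ≤ n) : f (fun _ => 0) = 0 := by
  simpa only [Function.update_eq_self] using hf ⟨0, hn⟩ 0

theorem IsLinearQ.exists_kleinForm_eq_one_add_sum (hf : IsLinearQ f) {c : V4} (hc : c ≠ 0) :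
    ∃ F : Fin n → V4 → ZMod 2, ∀ x, kleinForm c (f x) = 1 + ∑ i, F i (x i) := by
  obtain ⟨T, -, mem_iff⟩ := hf 0 c hc.symm
  refine ⟨fun i v => if v ∈ T i then 1 else 0, fun x => ?_⟩
  have eq_one_add_of_iff : ∀ p q : ZMod 2, (p = 0 ↔ q = 1) → p = 1 + q := by decide
  exact eq_one_add_of_iff _ _ ((kleinForm_eq_zero_iff hc _).trans (mem_iff x))

theorem IsLinearQ.kleinForm_apply (hlin : IsLinearQ f) (hred : IsReducedQ f) (hn : 1 ≤ n)
    {c : V4} (hc : c ≠ 0) (x : Fin n → V4) :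
    kleinForm c (f x) = ∑ i, kleinForm c (x i) := by
  obtain ⟨F, hF⟩ := hlin.exists_kleinForm_eq_one_add_sum hc
  simpa only [hred.map_zero hn, hred _ _, kleinForm_zero_right, sub_zero] using
    sub_eq_sum_update_sub_of_eq_const_add_sum hF (fun _ => 0) x

theorem IsLinearQ.eq_kleinSum (hlin : IsLinearQ f) (hred : IsReducedQ f) (hn : 1 ≤ n) :
    f = kleinSum := by
  funext x
  refine eq_of_forall_kleinForm_eq fun c hc => ?_
  rw [hlin.kleinForm_apply hred hn hc, kleinForm_kleinSum]

end Quasigroups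

/-- Proposition 14: for every `n ≥ 1` there is exactly one reduced linear
`n`-quasigroup of order 4. -/
theorem unique_reduced_linear (n : ℕ) (hn : 1 ≤ n) :
    Nat.card {f : (Fin n → V4) → V4 //
        IsNQuasigroup f ∧ IsLinearQ f ∧ IsReducedQ f} = 1 := by
  rw [Nat.card_eq_one_iff_exists]
  refine ⟨⟨kleinSum, isNQuasigroup_kleinSum, isLinearQ_kleinSum hn, isReducedQ_kleinSum⟩, ?_⟩
  rintro ⟨f, -, hlin, hred⟩
  exact Subtype.ext (hlin.eq_kleinSum hred hn)
end
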